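/- arXiv:nlin/0402026 — 6 statements merged into one kernel-verified Lean document; each statement's English description precedes it below -/
import Mathlib

section
/- Let V be a finite-dimensional real vector space and let P₀, P₁ : V* → V be linear maps that are skew-symmetric with respect to the duality pairing, i.e. ⟨α, P·β⟩ = −⟨β, P·α⟩ for all covectors α, β, for P = P₀ and P = P₁. Suppose α, β ∈ V* and real numbers λ_α ≠ λ_β satisfy P₁α = λ_α·P₀α and P₁β = λ_β·P₀β. Then ⟨α, P₀β⟩ = 0 and ⟨α, P₁β⟩ = 0; that is, eigenvectors of the bihamiltonian pair (P₁, P₀) belonging to different eigenvalues are in involution with respect to both structures. -/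
open Module (Dual)

section

variable {R V : Type*} [CommRing R] [AddCommGroup V] [Module R V]
  {P₀ P₁ : Dual R V →ₗ[R] V}

theorem apply_eq_mul_apply_of_skew_of_left_eigenvector
    (hP₀ : ∀ a b : Dual R V, a (P₀ b) = -b (P₀ a))
    (hP₁ : ∀ a b : Dual R V, a (P₁ b) = -b (P₁ a))
    {α : Dual R V} {l : R} (hα : P₁ α = l • P₀ α) (β : Dual R V) :
    α (P₁ β) = l * α (P₀ β) :=
  calc
    α (P₁ β) = -β (P₁ α) := hP₁ α β
    _ = l * -β (P₀ α) := by rw [hα, map_smul, smul_eq_mul, mul_neg]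
    _ = l * α (P₀ β) := by rw [← hP₀ α β]

theorem bihamiltonian_eigenvectors_in_involution_general [NoZeroDivisors R]
    (hP₀ : ∀ a b : Dual R V, a (P₀ b) = -b (P₀ a))
    (hP₁ : ∀ a b : Dual R V, a (P₁ b) = -b (P₁ a))
    {α β : Dual R V} {lα lβ : R} (hne : lα ≠ lβ)
    (hα : P₁ α = lα • P₀ α) (hβ : P₁ β = lβ • P₀ β) :
    α (P₀ β) = 0 ∧ α (P₁ β) = 0 := by
  have left_eigen : α (P₁ β) = lα * α (P₀ β) :=
    apply_eq_mul_apply_of_skew_of_left_eigenvector hP₀ hP₁ hα β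
  have right_eigen : α (P₁ β) = lβ * α (P₀ β) := by
    rw [hβ, map_smul, smul_eq_mul]
  have involution₀ : α (P₀ β) = 0 :=
    (mul_eq_mul_right_iff.mp (left_eigen.symm.trans right_eigen)).resolve_left hne
  exact ⟨involution₀, by rw [right_eigen, involution₀, mul_zero]⟩

end

/-- Eigenvectors of a bihamiltonian pair of skew-symmetric maps belonging to
different eigenvalues are in involution with respect to both structures. -/
theorem bihamiltonian_eigenvectors_in_involution
    (V : Type*) [AddCommGroup V] [Module ℝ V] [FiniteDimensional ℝ V]
    (P₀ P₁ : Module.Dual ℝ V →ₗ[ℝ] V)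
    (hP₀ : ∀ a b : Module.Dual ℝ V, a (P₀ b) = - b (P₀ a))
    (hP₁ : ∀ a b : Module.Dual ℝ V, a (P₁ b) = - b (P₁ a))
    (α β : Module.Dual ℝ V) (lα lβ : ℝ) (hne : lα ≠ lβ)
    (hα : P₁ α = lα • P₀ α) (hβ : P₁ β = lβ • P₀ β) :
    α (P₀ β) = 0 ∧ α (P₁ β) = 0 :=
  bihamiltonian_eigenvectors_in_involution_general hP₀ hP₁ hne hα hβ
end

section
/- Fix integers n ≥ 2 and r ≥ 1, a commutative ring R, n-tuples (A_1,…,A_n) and (α_1,…,α_n) of r×r matrices over R, and λ ∈ R. Define for each i = 1,…,n the matrix X_i(λ) = Σ_{k=1}^{i−1}[A_k, α_k − α_i] + [A_i, (i−1−λ)·α_i + Σ_{k=i+1}^{n} α_k]. Then for every a with 2 ≤ a ≤ n, (λ−a+2)·X_a(λ) + Σ_{j=1}^{a−1} X_j(λ) = [L_a(λ), M_a(λ)], where L_a(λ) = (λ−a+2)·A_a + Σ_{k=1}^{a−1} A_k and M_a(λ) = (a−1−λ)·α_a + Σ_{k=a+1}^{n} α_k. In other words, along any vector field Hamiltonian with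 respect to the Poisson pencil R − λP of the homogeneous sl(r) Gaudin model, each Lax matrix L_a(λ) evolves according to a Lax equation. -/
open Finset

/-!
Only the bilinearity of the bracket matters. Combining the terms of `X₁ + ⋯ + X_m` with the same
`A_k` leaves `∑_{k ≤ m} [A_k, (m - 1 - λ) α_k + ∑_{l > m} α_l]`. Put `m = a - 1`: the second entry
is then `M_a - (λ - a + 2) (α_k - α_a)`, so the partial sum is
`[∑_{k < a} A_k, M_a] - (λ - a + 2) ∑_{k < a} [A_k, α_k - α_a]`. Adding `(λ - a + 2) X_a` cancels
the last sum and supplies the missing term `[(λ - a + 2) A_a, M_a]`.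
-/

namespace Gaudin

variable {R U V W : Type*} [CommRing R] [AddCommGroup U] [Module R U] [AddCommGroup V] [Module R V]
  [AddCommGroup W] [Module R W]

/-- The Lax matrix `L_a(λ)` of the homogeneous Gaudin model. As for all families here, the sites
are `1, …, n`; the value at `0` is irrelevant. -/
def laxMatrix (A : ℕ → U) (lam : R) (a : ℕ) : U :=
  (lam - (a : R) + 2) • A a + ∑ k ∈ Icc 1 (a - 1), A k

/-- The second member `M_a(λ)` of the Lax pair, attached to the gradient `α` of a Hamiltonian. -/
def laxPartner (n : ℕ) (α : ℕ → V) (lam : R) (a : ℕ) : V :=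
  ((a : R) - 1 - lam) • α a + ∑ k ∈ Icc (a + 1) n, α k

/-- The component at site `i` of the vector field that is Hamiltonian for the Poisson pencil
`R - λP`, for a Hamiltonian with gradient `α`. The bilinear map `B` plays the role of the bracket;
it may also be the coadjoint pairing, with `A` in the dual of a Lie algebra and `α` in the Lie
algebra. -/
def pencilField (B : U →ₗ[R] V →ₗ[R] W) (n : ℕ) (A : ℕ → U) (α : ℕ → V) (lam : R) (i : ℕ) : W :=
  ∑ k ∈ Icc 1 (i - 1), B (A k) (α k - α i) + B (A i) (laxPartner n α lam i)

theorem smul_add_sum_Icc_eq_laxPartner_sub (α : ℕ → V) (lam : R) (x : V) {m n : ℕ} (h : m < n) :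
    ((m : R) - 1 - lam) • x + ∑ l ∈ Icc (m + 1) n, α l =
      laxPartner n α lam (m + 1) - (lam - ((m + 1 : ℕ) : R) + 2) • (x - α (m + 1)) := by
  rw [laxPartner, ← add_sum_Ioc_eq_sum_Icc h, Icc_add_one_left_eq_Ioc]
  push_cast
  module

variable (B : U →ₗ[R] V →ₗ[R] W) (A : ℕ → U) (α : ℕ → V) (lam : R)

theorem sum_pencilField {m n : ℕ} (h : m ≤ n) :
    ∑ j ∈ Icc 1 m, pencilField B n A α lam j =
      ∑ k ∈ Icc 1 m, B (A k) (((m : R) - 1 - lam) • α k + ∑ l ∈ Icc (m + 1) n, α l) := by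
  induction m with
  | zero => simp
  | succ m ih =>
    have entry_succ (k : ℕ) :
        ((m : R) - 1 - lam) • α k + ∑ l ∈ Icc (m + 1) n, α l + (α k - α (m + 1)) =
          (((m + 1 : ℕ) : R) - 1 - lam) • α k + ∑ l ∈ Icc (m + 1 + 1) n, α l := by
      rw [← add_sum_Ioc_eq_sum_Icc h, Icc_add_one_left_eq_Ioc]
      push_cast
      module
    rw [sum_Icc_succ_top (by lia), sum_Icc_succ_top (by lia), ih (by lia), pencilField,
      Nat.add_sub_cancel, ← add_assoc, ← sum_add_distrib]
    simp only [← map_add, entry_succ, laxPartner]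

theorem sum_pencilField_eq_sub {m n : ℕ} (h : m < n) :
    ∑ j ∈ Icc 1 m, pencilField B n A α lam j =
      B (∑ k ∈ Icc 1 m, A k) (laxPartner n α lam (m + 1)) -
        (lam - ((m + 1 : ℕ) : R) + 2) • ∑ k ∈ Icc 1 m, B (A k) (α k - α (m + 1)) := by
  simp only [sum_pencilField B A α lam h.le, smul_add_sum_Icc_eq_laxPartner_sub α lam _ h, map_sub,
    map_smul, sum_sub_distrib, map_sum, LinearMap.sum_apply, ← smul_sum]

end Gaudin

theorem gaudin_lax_equation_general {R U V W : Type*} [CommRing R] [AddCommGroup U] [Module R U]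
    [AddCommGroup V] [Module R V] [AddCommGroup W] [Module R W] (B : U →ₗ[R] V →ₗ[R] W)
    (A : ℕ → U) (α : ℕ → V) (lam : R) {a n : ℕ} (ha : 1 ≤ a) (han : a ≤ n) :
    (lam - (a : R) + 2) • Gaudin.pencilField B n A α lam a +
        ∑ j ∈ Icc 1 (a - 1), Gaudin.pencilField B n A α lam j =
      B (Gaudin.laxMatrix A lam a) (Gaudin.laxPartner n α lam a) := by
  obtain ⟨m, rfl⟩ := Nat.exists_eq_add_of_le' ha
  rw [Nat.add_sub_cancel, Gaudin.sum_pencilField_eq_sub B A α lam han, Gaudin.pencilField,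
    Gaudin.laxMatrix, Nat.add_sub_cancel, map_add, map_smul, LinearMap.add_apply,
    LinearMap.smul_apply]
  module

/-- Along any vector field Hamiltonian w.r.t. the Poisson pencil `R − λP` of the
homogeneous `sl(r)` Gaudin model, each Lax matrix `L_a(λ)` evolves according to
a Lax equation `L̇_a = [L_a(λ), M_a(λ)]`. -/
theorem gaudin_lax_equation (n r : ℕ) (hn : 2 ≤ n) (hr : 1 ≤ r)
    (R : Type*) [CommRing R]
    (A α : ℕ → Matrix (Fin r) (Fin r) R) (lam : R)
    (X : ℕ → Matrix (Fin r) (Fin r) R)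
    (hX : ∀ i, X i =
      ∑ k ∈ Icc 1 (i - 1), (A k * (α k - α i) - (α k - α i) * A k)
      + (A i * (((i : R) - 1 - lam) • α i + ∑ k ∈ Icc (i + 1) n, α k)
         - (((i : R) - 1 - lam) • α i + ∑ k ∈ Icc (i + 1) n, α k) * A i))
    (a : ℕ) (ha2 : 2 ≤ a) (han : a ≤ n) :
    (lam - (a : R) + 2) • X a + ∑ j ∈ Icc 1 (a - 1), X j
      = ((lam - (a : R) + 2) • A a + ∑ k ∈ Icc 1 (a - 1), A k)
          * (((a : R) - 1 - lam) • α a + ∑ k ∈ Icc (a + 1) n, α k)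
        - (((a : R) - 1 - lam) • α a + ∑ k ∈ Icc (a + 1) n, α k)
          * ((lam - (a : R) + 2) • A a + ∑ k ∈ Icc 1 (a - 1), A k) := by
  let bracket := LinearMap.mul R (Matrix (Fin r) (Fin r) R) - (LinearMap.mul R _).flip
  obtain rfl : X = Gaudin.pencilField bracket n A α lam := funext hX
  exact gaudin_lax_equation_general bracket A α lam (by lia) han
end

section
/- Fix integers n ≥ 2, r ≥ 1 and m ≥ 0, a commutative ring R, n-tuples (A_1,…,A_n) and (α_1,…,α_n) of r×r matrices over R, and λ ∈ R. With X_i(λ) = Σ_{k=1}^{i−1}[A_k, α_k − α_i] + [A_i, (i−1−λ)·α_i + Σ_{k=i+1}^{n} α_k] and L_a(λ) = (λ−a+2)·A_a + Σ_{k=1}^{a−1} A_k (for 2 ≤ a ≤ n), one has Tr( L_a(λ)^m · ((λ−a+2)·X_a(λ) + Σ_{j=1}^{a−1} X_j(λ)) ) = 0. This expresses that the spectral invariants Tr(L_a(λ)^{m+1}) of the Lax matrices are Casimirs of the Poisson pencil R − λP. -/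
open Finset

/-! The derivative of the Lax matrix `L_a` along the Hamiltonian vector field of the pencil is a
commutator `⁅L_a, M_a⁆`. Indeed, in `X_1 + ⋯ + X_b` the terms `-⁅A_k, α_i⁆` with `k < i ≤ b` cancel
against those coming from the sums over the sites above `k`, and what remains combines with
`X_a` for `a = b + 1`. If `C` commutes with `L_a`, for instance if `C` is a power of `L_a`, then
`C * ⁅L_a, M_a⁆ = ⁅L_a, C * M_a⁆` has trace zero. -/

section LaxEquation

variable {R 𝔤 : Type*} [CommRing R] [LieRing 𝔤] [LieAlgebra R 𝔤]

/-- The second member `M_i(λ)` of the Lax pair of the Gaudin model, where `α` is the gradient of the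
Hamiltonian. The sites are numbered `1, …, n`. -/
def gaudinLaxPartner (n : ℕ) (α : ℕ → 𝔤) (lam : R) (i : ℕ) : 𝔤 :=
  ((i : R) - 1 - lam) • α i + ∑ k ∈ Icc (i + 1) n, α k

/-- The component `X_i(λ)` at the site `i` of the Hamiltonian vector field, with gradient `α`, of
the Poisson pencil of the `n`-site Gaudin model, for an arbitrary Lie algebra in place of
`sl(r)`. -/
def gaudinPencilField (n : ℕ) (A α : ℕ → 𝔤) (lam : R) (i : ℕ) : 𝔤 :=
  ∑ k ∈ Icc 1 (i - 1), ⁅A k, α k - α i⁆ + ⁅A i, gaudinLaxPartner n α lam i⁆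

/-- The Lax matrix `L_a(λ)` of the Gaudin model. It is linear in `A`, so its derivative along a
vector field `X` is `gaudinLax X lam a`. -/
def gaudinLax (A : ℕ → 𝔤) (lam : R) (a : ℕ) : 𝔤 :=
  (lam - (a : R) + 2) • A a + ∑ k ∈ Icc 1 (a - 1), A k

theorem gaudinPencilField_succ (n : ℕ) (A α : ℕ → 𝔤) (lam : R) (b : ℕ) :
    gaudinPencilField n A α lam (b + 1) =
      ∑ k ∈ Icc 1 b, ⁅A k, α k⁆ - ⁅∑ k ∈ Icc 1 b, A k, α (b + 1)⁆
        + ⁅A (b + 1), gaudinLaxPartner n α lam (b + 1)⁆ := by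
  simp only [gaudinPencilField, Nat.add_sub_cancel, lie_sub, sum_sub_distrib, sum_lie]

theorem sum_Icc_gaudinPencilField {n : ℕ} (A α : ℕ → 𝔤) (lam : R) {b : ℕ} (hb : b ≤ n) :
    ∑ j ∈ Icc 1 b, gaudinPencilField n A α lam j =
      ((b : R) - 1 - lam) • ∑ k ∈ Icc 1 b, ⁅A k, α k⁆
        + ⁅∑ k ∈ Icc 1 b, A k, ∑ k ∈ Icc (b + 1) n, α k⁆ := by
  induction b with
  | zero => simp
  | succ b ih =>
    have hle : 1 ≤ b + 1 := Nat.le_add_left 1 b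
    rw [sum_Icc_succ_top hle, sum_Icc_succ_top hle, sum_Icc_succ_top hle,
      ih (Nat.le_of_succ_le hb), gaudinPencilField_succ, gaudinLaxPartner,
      ← insert_Icc_add_one_left_eq_Icc hb, sum_insert (by simp)]
    simp only [lie_add, add_lie, lie_smul, Nat.cast_succ]
    module

theorem gaudinLax_gaudinPencilField {n : ℕ} (A α : ℕ → 𝔤) (lam : R) {a : ℕ} (ha : 1 ≤ a)
    (han : a ≤ n) :
    gaudinLax (gaudinPencilField n A α lam) lam a =
      ⁅gaudinLax A lam a, gaudinLaxPartner n α lam a⁆ := by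
  obtain ⟨b, rfl⟩ := Nat.exists_eq_add_of_le' ha
  rw [gaudinLax, gaudinLax, Nat.add_sub_cancel, sum_Icc_gaudinPencilField A α lam (by omega),
    gaudinPencilField_succ, gaudinLaxPartner,
    ← insert_Icc_add_one_left_eq_Icc han, sum_insert (by simp)]
  simp only [lie_add, add_lie, lie_smul, smul_lie, Nat.cast_succ]
  module

end LaxEquation

attribute [local instance] LieRing.ofAssociativeRing

theorem map_mul_lie_eq_zero_of_commute {M N : Type*} [Ring M] [AddCommGroup N] (τ : M →+ N)
    (hτ : ∀ x y, τ (x * y) = τ (y * x)) {x y : M} (h : Commute x y) (z : M) :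
    τ (x * ⁅y, z⁆) = 0 := by
  have hlie : x * ⁅y, z⁆ = y * (x * z) - x * z * y := by
    rw [Ring.lie_def, mul_sub, ← mul_assoc, h.eq, mul_assoc, mul_assoc]
  rw [hlie, map_sub, hτ y, sub_self]

theorem gaudin_spectral_invariants_casimir_general {R M N : Type*} [CommRing R] [Ring M]
    [Algebra R M] [AddCommGroup N] (τ : M →+ N) (hτ : ∀ x y, τ (x * y) = τ (y * x))
    {n : ℕ} (A α : ℕ → M) (lam : R) {a : ℕ} (ha : 1 ≤ a) (han : a ≤ n)
    {C : M} (hC : Commute C (gaudinLax A lam a)) :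
    τ (C * gaudinLax (gaudinPencilField n A α lam) lam a) = 0 := by
  rw [gaudinLax_gaudinPencilField A α lam ha han]
  exact map_mul_lie_eq_zero_of_commute τ hτ hC _

/-- The spectral invariants `Tr(L_a(λ)^{m+1})` of the Lax matrices of the
homogeneous `sl(r)` Gaudin model are Casimirs of the Poisson pencil `R − λP`:
`Tr(L_a(λ)^m · (pencil Hamiltonian vector field)) = 0`. -/
theorem gaudin_spectral_invariants_casimir (n r m : ℕ) (hn : 2 ≤ n) (hr : 1 ≤ r)
    (R : Type*) [CommRing R]
    (A α : ℕ → Matrix (Fin r) (Fin r) R) (lam : R)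
    (X : ℕ → Matrix (Fin r) (Fin r) R)
    (hX : ∀ i, X i =
      ∑ k ∈ Icc 1 (i - 1), (A k * (α k - α i) - (α k - α i) * A k)
      + (A i * (((i : R) - 1 - lam) • α i + ∑ k ∈ Icc (i + 1) n, α k)
         - (((i : R) - 1 - lam) • α i + ∑ k ∈ Icc (i + 1) n, α k) * A i))
    (a : ℕ) (ha2 : 2 ≤ a) (han : a ≤ n) :
    Matrix.trace
      (((lam - (a : R) + 2) • A a + ∑ k ∈ Icc 1 (a - 1), A k) ^ m
        * ((lam - (a : R) + 2) • X a + ∑ j ∈ Icc 1 (a - 1), X j)) = 0 := by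
  obtain rfl : X = gaudinPencilField n A α lam := funext hX
  exact gaudin_spectral_invariants_casimir_general (Matrix.traceAddMonoidHom (Fin r) R)
    Matrix.trace_mul_comm A α lam (one_le_two.trans ha2) han (Commute.pow_self _ m)
end

section
/- Fix integers n ≥ 2, r ≥ 1 and a with 2 ≤ a ≤ n, a commutative ring R, and an n-tuple (A_1,…,A_n) of r×r matrices over R. Set S_a = Σ_{i=1}^{a} A_i, and apply the R vector-field formula to the gradient n-tuple α_j = A_j for j ≤ a and α_j = 0 for j > a (this is the gradient of ½·Σ_{i=1}^{a} Tr(A_i²)). Then the resulting i-th component Σ_{k=1}^{i−1}[A_k, α_k − α_i] + [A_i, (i−1)·α_i + Σ_{k=i+1}^{n} α_k] equals [A_i, S_a] when i ≤ a, and equals 0 when i > a. Since [A_i, S_a]·1_{i≤a} is exactly the i-th component of the Lie–Poisson (P) vector field of the bending Hamiltonian ½·K_a with K_a = Tr(S_a²), this establishes the Lenard–Magri relation R d(Σ_{i=1}^{a} Tr(A_i²)) = P d K_a. -/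
open Finset

/-!
For a gradient `β` with `[A_k, β_k] = 0` at every site, such as that of a sum of one-site Casimirs,
the diagonal terms of the `R` vector field drop out, leaving
`[β_i, Σ_{k<i} A_k] + [A_i, Σ_{k>i} β_k]`. Let `β` be `A` cut off after site `a`. For `i ≤ a` the
two sums are the parts of `S_a` before and after site `i`, and its middle term `A_i` contributes
`[A_i, A_i] = 0`; for `i > a` both `β_i` and the second sum vanish.
-/

section

variable {ι M : Type*} [LinearOrder ι] [LocallyFiniteOrder ι] [AddCommMonoid M]

theorem sum_Ico_add_add_sum_Ioc {p i a : ι} (hpi : p ≤ i) (hia : i ≤ a) (f : ι → M) :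
    ∑ k ∈ Ico p i, f k + f i + ∑ k ∈ Ioc i a, f k = ∑ k ∈ Icc p a, f k := by
  have hdisj : Disjoint (Ico p i) (Icc i a) :=
    disjoint_left.2 fun k hk hk' => (mem_Ico.1 hk).2.not_ge (mem_Icc.1 hk').1
  have hunion : Icc p a = Ico p i ∪ Icc i a := by
    rw [← coe_inj, coe_union, coe_Icc, coe_Ico, coe_Icc, Set.Ico_union_Icc_eq_Icc hpi hia]
  rw [hunion, sum_union hdisj, ← add_sum_Ioc_eq_sum_Icc hia, add_assoc]

theorem sum_Ioc_ite_le {a q : ι} (haq : a ≤ q) (i : ι) (f : ι → M) :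
    ∑ k ∈ Ioc i q, (if k ≤ a then f k else 0) = ∑ k ∈ Ioc i a, f k := by
  have hfilter : {k ∈ Ioc i q | k ≤ a} = Ioc i a := by
    ext k
    simp only [mem_filter, mem_Ioc, and_assoc, and_congr_right_iff]
    exact fun _ => ⟨And.right, fun hka => ⟨hka.trans haq, hka⟩⟩
  rw [← sum_filter, hfilter]

end

namespace Gaudin

section

variable {ι L : Type*} [LinearOrder ι] [LieRing L]

/-- The vector field of the Lie–Poisson structure `P` attached to the gradient `β`. -/
def liePoissonField (A β : ι → L) (i : ι) : L := ⁅A i, β i⁆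

/-- For matrices, the gradient of `½·Σ_{i ≤ a} Tr(A_i²)` with respect to the trace form. -/
def quadraticGradient (a : ι) (A : ι → L) (j : ι) : L := if j ≤ a then A j else 0

theorem lie_quadraticGradient_eq_zero (a : ι) (A : ι → L) (j : ι) :
    ⁅A j, quadraticGradient a A j⁆ = 0 := by
  rw [quadraticGradient]
  split_ifs
  · exact lie_self _
  · exact lie_zero _

variable [LocallyFiniteOrder ι]

/-- The vector field of the second Poisson structure `R` attached to the gradient `β`. The sites
form the interval `Icc p q`, and `#(Ico p i)` is the factor `i - 1` of the usual labelling
`1, …, n`. -/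
def secondPoissonField (p q : ι) (A β : ι → L) (i : ι) : L :=
  ∑ k ∈ Ico p i, ⁅A k, β k - β i⁆ + ⁅A i, #(Ico p i) • β i + ∑ k ∈ Ioc i q, β k⁆

/-- For matrices, the gradient of `½·K_a = ½·Tr(S_a²)` with respect to the trace form, where
`S_a` sums the sites from `p` to `a`. -/
def bendingGradient (p a : ι) (A : ι → L) (j : ι) : L :=
  if j ≤ a then ∑ k ∈ Icc p a, A k else 0

theorem liePoissonField_bendingGradient (p a : ι) (A : ι → L) (i : ι) :
    liePoissonField A (bendingGradient p a A) i
      = if i ≤ a then ⁅A i, ∑ k ∈ Icc p a, A k⁆ else 0 := by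
  simp only [liePoissonField, bendingGradient, apply_ite (⁅A i, ·⁆), lie_zero]

theorem secondPoissonField_of_lie_eq_zero (p q : ι) {A β : ι → L} (hAβ : ∀ k, ⁅A k, β k⁆ = 0)
    (i : ι) :
    secondPoissonField p q A β i = ⁅β i, ∑ k ∈ Ico p i, A k⁆ + ⁅A i, ∑ k ∈ Ioc i q, β k⁆ := by
  simp only [secondPoissonField, lie_sub, hAβ, zero_sub, lie_skew, ← lie_sum, lie_add, lie_nsmul,
    nsmul_zero, zero_add]

end

theorem secondPoissonField_one_left (R : Type*) {L : Type*} [CommRing R] [LieRing L]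
    [LieAlgebra R L] (n : ℕ) (A β : ℕ → L) {i : ℕ} (hi : 1 ≤ i) :
    secondPoissonField 1 n A β i = ∑ k ∈ Icc 1 (i - 1), ⁅A k, β k - β i⁆
      + ⁅A i, ((i : R) - 1) • β i + ∑ k ∈ Icc (i + 1) n, β k⁆ := by
  have hcard : #(Ico 1 i) • β i = ((i : R) - 1) • β i := by
    rw [Nat.card_Ico, ← Nat.cast_smul_eq_nsmul R, Nat.cast_sub hi, Nat.cast_one]
  rw [secondPoissonField, hcard, Icc_add_one_left_eq_Ioc,
    Icc_sub_one_right_eq_Ico_of_not_isMin (not_isMin_of_lt hi)]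

end Gaudin

open Gaudin

theorem gaudin_lenard_magri_bending_general {ι L : Type*} [LinearOrder ι] [LocallyFiniteOrder ι]
    [LieRing L] {p q a i : ι} (haq : a ≤ q) (hpi : p ≤ i) (A : ι → L) :
    secondPoissonField p q A (quadraticGradient a A) i
      = liePoissonField A (bendingGradient p a A) i := by
  have htail : ∑ k ∈ Ioc i q, quadraticGradient a A k = ∑ k ∈ Ioc i a, A k :=
    sum_Ioc_ite_le haq i A
  rw [secondPoissonField_of_lie_eq_zero p q (lie_quadraticGradient_eq_zero a A), htail,
    liePoissonField_bendingGradient]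
  rcases le_or_gt i a with hia | hai
  · rw [quadraticGradient, if_pos hia, if_pos hia, ← sum_Ico_add_add_sum_Ioc hpi hia A, lie_add,
      lie_add, lie_self, add_zero]
  · rw [quadraticGradient, if_neg hai.not_ge, if_neg hai.not_ge, Ioc_eq_empty_of_le hai.le,
      sum_empty, zero_lie, lie_zero, add_zero]

/-- Lenard–Magri relation `R d(Σ_{i≤a} Tr(A_i²)) = P d K_a` for the bending
Hamiltonians: applying the second Poisson structure `R` to the gradient of
`½·Σ_{i=1}^{a} Tr(A_i²)` gives the Lie–Poisson vector field of `½·K_a`, whose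
`i`-th component is `[A_i, S_a]` for `i ≤ a` and `0` for `i > a`. -/
theorem gaudin_lenard_magri_bending (n r : ℕ) (hn : 2 ≤ n) (hr : 1 ≤ r)
    (a : ℕ) (ha2 : 2 ≤ a) (han : a ≤ n)
    (R : Type*) [CommRing R]
    (A : ℕ → Matrix (Fin r) (Fin r) R)
    (α : ℕ → Matrix (Fin r) (Fin r) R)
    (hα : ∀ j, α j = if j ≤ a then A j else 0)
    (S : Matrix (Fin r) (Fin r) R) (hS : S = ∑ i ∈ Icc 1 a, A i) :
    ∀ i, 1 ≤ i → i ≤ n →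
      ∑ k ∈ Icc 1 (i - 1), (A k * (α k - α i) - (α k - α i) * A k)
      + (A i * (((i : R) - 1) • α i + ∑ k ∈ Icc (i + 1) n, α k)
         - (((i : R) - 1) • α i + ∑ k ∈ Icc (i + 1) n, α k) * A i)
      = if i ≤ a then A i * S - S * A i else 0 := by
  intro i hi _
  let _ : LieRing (Matrix (Fin r) (Fin r) R) := LieRing.ofAssociativeRing
  obtain rfl : α = quadraticGradient a A := funext hα
  have hRP := gaudin_lenard_magri_bending_general han hi A
  simpa only [secondPoissonField_one_left R n _ _ hi, liePoissonField_bendingGradient, ← hS,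
    Ring.lie_def] using hRP
end

section
/- Fix integers n ≥ 1 and r ≥ 1, a commutative ring R and λ ∈ R. On the R-module of n-tuples X = (X_1,…,X_n) of r×r matrices over R, define the bilinear bracket whose m-th component is ([X,Y]^λ)_m = (m−1−λ)·[X_m, Y_m] + Σ_{i=m+1}^{n} ( [X_m, Y_i] − [X_i, Y_i] + [X_i, Y_m] ), where [A,B] = AB − BA. Then for every λ this bracket is alternating ([X,X]^λ = 0) and satisfies the Jacobi identity, i.e. it defines a Lie algebra structure on n-tuples of r×r matrices. (This Lie algebra structure is the one dual to the linear Poisson pencil R − λP of the homogeneous sl(r) Gaudin model, so the statement expresses that R − λP is a Poisson pencil, i.e. that R is a Poisson structure compatible with the Lie–Poisson structure P.) -/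
open Finset

/-!
Let `S m X = X_{m+1} + ⋯ + X_n` and `c m = m - 1 - λ`. Telescoping turns the bracket into
`S m [X, Y]^λ = [S m X, S m Y] + c m • S m [X, Y]`, where `[X, Y]` is the componentwise bracket.
Hence `S m` of the Jacobi sum is the Jacobi sum of `S m X, S m Y, S m Z`, which vanishes, plus
`c m` times the cyclic sum of `[S m X, S m [Y, Z]] + S m [X, [Y, Z]^λ]`, which vanishes by another
telescoping. As the tail sums determine a tuple, the Jacobi identity follows.
-/

section TailSum

variable {M : Type*} [AddCommMonoid M]

/-- The sum `X_{m+1} + ⋯ + X_n` of the entries beyond the `m`-th of the tuple `(X_1, …, X_n)`,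
which is encoded as a function on `ℕ` whose values outside `1, …, n` are irrelevant. -/
def tailSum (n : ℕ) (X : ℕ → M) (m : ℕ) : M :=
  ∑ i ∈ Icc (m + 1) n, X i

theorem tailSum_self (n : ℕ) (X : ℕ → M) : tailSum n X n = 0 := by
  simp [tailSum]

theorem tailSum_eq_add {n m : ℕ} (X : ℕ → M) (h : m < n) :
    tailSum n X m = X (m + 1) + tailSum n X (m + 1) := by
  rw [tailSum, tailSum, Icc_add_one_left_eq_Ioc (m + 1), add_sum_Ioc_eq_sum_Icc h]

theorem tailSum_add (n : ℕ) (X Y : ℕ → M) (m : ℕ) :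
    tailSum n (X + Y) m = tailSum n X m + tailSum n Y m :=
  sum_add_distrib

theorem tailSum_eq_of_forall_eq_add {n m : ℕ} {X F : ℕ → M} (hn : F n = 0)
    (hF : ∀ k < n, F k = X (k + 1) + F (k + 1)) (hm : m ≤ n) : tailSum n X m = F m := by
  refine Nat.decreasingInduction' (fun k hk _ ih => ?_) hm ?_
  · rw [tailSum_eq_add X hk, ih, hF k hk]
  · rw [tailSum_self, hn]

theorem eq_zero_of_tailSum_eq_zero {n m : ℕ} {X : ℕ → M} (h : ∀ k ≤ n, tailSum n X k = 0)
    (hm : 1 ≤ m) (hmn : m ≤ n) : X m = 0 := by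
  obtain ⟨k, rfl⟩ := Nat.exists_eq_add_of_le' hm
  simpa only [h k (by omega), h (k + 1) hmn, add_zero] using (tailSum_eq_add X hmn).symm

end TailSum

/-- The Lie bracket of the product Lie algebra of tuples, dual to the Lie–Poisson structure `P`. -/
def componentwiseBracket {L : Type*} [LieRing L] (X Y : ℕ → L) (m : ℕ) : L :=
  ⁅X m, Y m⁆

section GaudinBracket

variable {R L : Type*} [CommRing R] [LieRing L] [LieAlgebra R L]

/-- The bracket on `n`-tuples of elements of a Lie algebra dual to the Poisson pencil `R − λP` of
the Gaudin model. Components `1, …, n` are the meaningful ones. -/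
def gaudinBracket (n : ℕ) (lam : R) (X Y : ℕ → L) (m : ℕ) : L :=
  ((m : R) - 1 - lam) • ⁅X m, Y m⁆
    + ∑ i ∈ Icc (m + 1) n, (⁅X m, Y i⁆ - ⁅X i, Y i⁆ + ⁅X i, Y m⁆)

variable (n : ℕ) (lam : R) (X Y Z : ℕ → L)

theorem gaudinBracket_self : gaudinBracket n lam X X = 0 := by
  funext m
  have skew (i : ℕ) : ⁅X m, X i⁆ + ⁅X i, X m⁆ = 0 := by rw [← lie_skew, neg_add_cancel]
  simp only [gaudinBracket, lie_self, smul_zero, sub_zero, skew, sum_const_zero, add_zero,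
    Pi.zero_apply]

theorem gaudinBracket_eq_tailSum (m : ℕ) :
    gaudinBracket n lam X Y m = ((m : R) - 1 - lam) • ⁅X m, Y m⁆
      + (⁅X m, tailSum n Y m⁆ - tailSum n (componentwiseBracket X Y) m
        + ⁅tailSum n X m, Y m⁆) := by
  simp only [gaudinBracket, tailSum, componentwiseBracket, sum_add_distrib, sum_sub_distrib,
    lie_sum, sum_lie]

variable {n} in
theorem tailSum_gaudinBracket {m : ℕ} (hm : m ≤ n) :
    tailSum n (gaudinBracket n lam X Y) m = ⁅tailSum n X m, tailSum n Y m⁆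
      + ((m : R) - 1 - lam) • tailSum n (componentwiseBracket X Y) m := by
  refine tailSum_eq_of_forall_eq_add (F := fun k => ⁅tailSum n X k, tailSum n Y k⁆
    + ((k : R) - 1 - lam) • tailSum n (componentwiseBracket X Y) k) ?_ (fun k hk => ?_) hm
  · simp only [tailSum_self, lie_zero, smul_zero, add_zero]
  · simp only [gaudinBracket_eq_tailSum, tailSum_eq_add _ hk, add_lie, lie_add,
      componentwiseBracket]
    push_cast
    module

theorem lie_gaudinBracket_cyclic (m : ℕ) :
    ⁅X m, gaudinBracket n lam Y Z m⁆ + ⁅Y m, gaudinBracket n lam Z X m⁆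
        + ⁅Z m, gaudinBracket n lam X Y m⁆
      = -((⁅X m, tailSum n (componentwiseBracket Y Z) m⁆ + ⁅tailSum n X m, ⁅Y m, Z m⁆⁆)
        + (⁅Y m, tailSum n (componentwiseBracket Z X) m⁆ + ⁅tailSum n Y m, ⁅Z m, X m⁆⁆)
        + (⁅Z m, tailSum n (componentwiseBracket X Y) m⁆ + ⁅tailSum n Z m, ⁅X m, Y m⁆⁆)) := by
  have jacobi_weight := congrArg (((m : R) - 1 - lam) • ·) (lie_jacobi (X m) (Y m) (Z m))
  have jacobi_tail_X := lie_jacobi (tailSum n X m) (Y m) (Z m)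
  have jacobi_tail_Y := lie_jacobi (tailSum n Y m) (Z m) (X m)
  have jacobi_tail_Z := lie_jacobi (tailSum n Z m) (X m) (Y m)
  simp only [gaudinBracket_eq_tailSum, lie_add, lie_sub, lie_smul]
  linear_combination (norm := module) jacobi_weight + jacobi_tail_X + jacobi_tail_Y + jacobi_tail_Z

variable {n} in
theorem tailSum_componentwiseBracket_gaudinBracket_cyclic {m : ℕ} (hm : m ≤ n) :
    tailSum n (componentwiseBracket X (gaudinBracket n lam Y Z)
        + componentwiseBracket Y (gaudinBracket n lam Z X)
        + componentwiseBracket Z (gaudinBracket n lam X Y)) m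
      = -(⁅tailSum n X m, tailSum n (componentwiseBracket Y Z) m⁆
        + ⁅tailSum n Y m, tailSum n (componentwiseBracket Z X) m⁆
        + ⁅tailSum n Z m, tailSum n (componentwiseBracket X Y) m⁆) := by
  refine tailSum_eq_of_forall_eq_add
    (F := fun k => -(⁅tailSum n X k, tailSum n (componentwiseBracket Y Z) k⁆
      + ⁅tailSum n Y k, tailSum n (componentwiseBracket Z X) k⁆
      + ⁅tailSum n Z k, tailSum n (componentwiseBracket X Y) k⁆)) ?_ (fun k hk => ?_) hm
  · simp only [tailSum_self, lie_zero, add_zero, neg_zero]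
  · have cyclic := lie_gaudinBracket_cyclic n lam X Y Z (k + 1)
    have jacobi := lie_jacobi (X (k + 1)) (Y (k + 1)) (Z (k + 1))
    simp only [Pi.add_apply, tailSum_eq_add _ hk, add_lie, lie_add, componentwiseBracket]
      at cyclic ⊢
    linear_combination (norm := abel) -cyclic - jacobi

variable {n} in
theorem tailSum_gaudinBracket_jacobi {m : ℕ} (hm : m ≤ n) :
    tailSum n (gaudinBracket n lam X (gaudinBracket n lam Y Z)
      + gaudinBracket n lam Y (gaudinBracket n lam Z X)
      + gaudinBracket n lam Z (gaudinBracket n lam X Y)) m = 0 := by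
  have jacobi_tail := lie_jacobi (tailSum n X m) (tailSum n Y m) (tailSum n Z m)
  have cyclic := tailSum_componentwiseBracket_gaudinBracket_cyclic lam X Y Z hm
  simp only [tailSum_add] at cyclic
  simp only [tailSum_add, tailSum_gaudinBracket lam _ _ hm, lie_add, lie_smul]
  linear_combination (norm := module) jacobi_tail + ((m : R) - 1 - lam) • cyclic

theorem gaudin_pencil_dual_bracket_lie_general :
    (∀ X : ℕ → L, gaudinBracket n lam X X = 0) ∧
    (∀ X Y Z : ℕ → L, ∀ m, 1 ≤ m → m ≤ n →
      gaudinBracket n lam X (gaudinBracket n lam Y Z) m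
        + gaudinBracket n lam Y (gaudinBracket n lam Z X) m
        + gaudinBracket n lam Z (gaudinBracket n lam X Y) m = 0) :=
  ⟨gaudinBracket_self n lam, fun X Y Z _ =>
    eq_zero_of_tailSum_eq_zero fun _ => tailSum_gaudinBracket_jacobi lam X Y Z⟩

end GaudinBracket

/-- The bracket on `n`-tuples of `r×r` matrices dual to the linear Poisson
pencil `R − λP` of the homogeneous `sl(r)` Gaudin model is alternating and
satisfies the Jacobi identity, i.e. it defines a Lie algebra structure: so
`R − λP` is a Poisson pencil. -/
theorem gaudin_pencil_dual_bracket_lie (n r : ℕ) (hn : 1 ≤ n) (hr : 1 ≤ r)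
    (R : Type*) [CommRing R] (lam : R)
    (B : (ℕ → Matrix (Fin r) (Fin r) R) → (ℕ → Matrix (Fin r) (Fin r) R) →
      ℕ → Matrix (Fin r) (Fin r) R)
    (hB : ∀ X Y m, B X Y m =
      ((m : R) - 1 - lam) • (X m * Y m - Y m * X m)
      + ∑ i ∈ Icc (m + 1) n,
          ((X m * Y i - Y i * X m) - (X i * Y i - Y i * X i)
            + (X i * Y m - Y m * X i))) :
    (∀ X, ∀ m, 1 ≤ m → m ≤ n → B X X m = 0) ∧
    (∀ X Y Z, ∀ m, 1 ≤ m → m ≤ n →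
      B X (B Y Z) m + B Y (B Z X) m + B Z (B X Y) m = 0) := by
  let _ : LieRing (Matrix (Fin r) (Fin r) R) := LieRing.ofAssociativeRing
  obtain rfl : B = gaudinBracket n lam := funext fun X => funext fun Y => funext (hB X Y)
  exact (gaudin_pencil_dual_bracket_lie_general n lam).imp_left
    fun alternating X m _ _ => congrFun (alternating X) m
end

section
/- Let R be a commutative ring, r ≥ 1, n ≥ 1, and let A_1,…,A_n be r×r matrices over R. For 1 ≤ l ≤ n set S_l = Σ_{i=1}^{l} A_i and K_l = Tr(S_l²). Then the bending Hamiltonians K_a and K_b are in involution with respect to the product Lie–Poisson structure: for all 1 ≤ a ≤ b ≤ n, Σ_{i=1}^{n} Tr( A_i · [ 2·S_a·1_{i≤a}, 2·S_b·1_{i≤b} ] ) = 0, where 2·S_l·1_{i≤l} is the i-th component of the gradient of K_l and [X,Y] = XY − YX. Equivalently, Σ_{i=1}^{a} Tr( A_i·(S_a·S_b − S_b·S_a) ) = 0. -/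
open Finset

/-! Write `S_I = ∑ i ∈ I, A_i` and `K_I = Φ(S_I, S_I)` for an invariant symmetric form `Φ`. The
gradients of `K_I` and `K_J` are constant on their supports `I` and `J`, so the Lie–Poisson bracket
of `K_I` and `K_J` collapses to `4 Φ(S_{I ∩ J}, [S_I, S_J])`. For nested or disjoint `I`, `J` the
first argument is `S_I`, `S_J` or `0`, and invariance gives `Φ(x, [x, y]) = -Φ([x, x], y) = 0`. -/

section InvariantForm

variable {R L ι : Type*} [CommRing R] [LieRing L] [LieAlgebra R L] {Φ : LinearMap.BilinForm R L}

theorem lieInvariant_apply_lie_self_left (hΦ : Φ.lieInvariant L) (x y : L) : Φ x ⁅x, y⁆ = 0 := by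
  rw [← neg_eq_zero, ← hΦ, lie_self, map_zero, LinearMap.zero_apply]

theorem lieInvariant_apply_lie_self_right (hΦ : Φ.lieInvariant L) (x y : L) : Φ y ⁅x, y⁆ = 0 := by
  rw [← lie_skew, map_neg, lieInvariant_apply_lie_self_left hΦ, neg_zero]

/-- The product Lie–Poisson bracket at the point `A` of `L ^ s`, of two functions with gradients `X`
and `Y` at `A`; gradients take values in `L` rather than its dual by means of the form `Φ`. -/
def liePoissonBracket (Φ : LinearMap.BilinForm R L) (s : Finset ι) (A X Y : ι → L) : R :=
  ∑ i ∈ s, Φ (A i) ⁅X i, Y i⁆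

variable [DecidableEq ι]

variable (R) in
/-- The gradient at `A`, with respect to a symmetric form `Φ`, of the bending Hamiltonian
`K_I(A) = Φ(S_I, S_I)`, where `S_I = ∑ j ∈ I, A j`. -/
def bendingGradient (A : ι → L) (I : Finset ι) (i : ι) : L :=
  if i ∈ I then (2 : R) • ∑ j ∈ I, A j else 0

theorem lie_bendingGradient (A : ι → L) (I J : Finset ι) (i : ι) :
    ⁅bendingGradient R A I i, bendingGradient R A J i⁆ =
      if i ∈ I ∩ J then (4 : R) • ⁅∑ j ∈ I, A j, ∑ j ∈ J, A j⁆ else 0 := by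
  have four : (2 : R) * 2 = 4 := by norm_num
  by_cases hI : i ∈ I <;> by_cases hJ : i ∈ J <;>
    simp [bendingGradient, hI, hJ, smul_smul, four]

theorem liePoissonBracket_bendingGradient (Φ : LinearMap.BilinForm R L) (A : ι → L)
    {s I J : Finset ι} (hs : I ∩ J ⊆ s) :
    liePoissonBracket Φ s A (bendingGradient R A I) (bendingGradient R A J) =
      4 * Φ (∑ i ∈ I ∩ J, A i) ⁅∑ j ∈ I, A j, ∑ j ∈ J, A j⁆ := by
  set c := ⁅∑ j ∈ I, A j, ∑ j ∈ J, A j⁆ with hc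
  calc liePoissonBracket Φ s A (bendingGradient R A I) (bendingGradient R A J)
      = ∑ i ∈ s, if i ∈ I ∩ J then 4 * Φ (A i) c else 0 := by
        simp only [liePoissonBracket, lie_bendingGradient, ← hc, apply_ite, map_smul, map_zero,
          smul_eq_mul]
    _ = ∑ i ∈ I ∩ J, 4 * Φ (A i) c := by rw [sum_ite_mem, inter_eq_right.mpr hs]
    _ = 4 * Φ (∑ i ∈ I ∩ J, A i) c := by rw [← mul_sum, map_sum, LinearMap.sum_apply]

theorem bending_hamiltonians_in_involution_general (hΦ : Φ.lieInvariant L) (A : ι → L)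
    {s I J : Finset ι} (hs : I ∩ J ⊆ s) (hIJ : I ⊆ J ∨ J ⊆ I ∨ Disjoint I J) :
    liePoissonBracket Φ s A (bendingGradient R A I) (bendingGradient R A J) = 0 ∧
      ∑ i ∈ I, Φ (A i) ⁅∑ j ∈ I, A j, ∑ j ∈ J, A j⁆ = 0 := by
  constructor
  · rw [liePoissonBracket_bendingGradient Φ A hs]
    rcases hIJ with hIJ | hJI | hdisj
    · rw [inter_eq_left.mpr hIJ, lieInvariant_apply_lie_self_left hΦ, mul_zero]
    · rw [inter_eq_right.mpr hJI, lieInvariant_apply_lie_self_right hΦ, mul_zero]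
    · rw [disjoint_iff_inter_eq_empty.mp hdisj, sum_empty, map_zero, LinearMap.zero_apply, mul_zero]
  · rw [← LinearMap.sum_apply, ← map_sum, lieInvariant_apply_lie_self_left hΦ]

theorem liePoissonBracket_bendingGradient_Icc_one (Φ : LinearMap.BilinForm R L) (A : ℕ → L)
    (n a b : ℕ) :
    liePoissonBracket Φ (Icc 1 n) A (bendingGradient R A (Icc 1 a))
        (bendingGradient R A (Icc 1 b)) =
      ∑ i ∈ Icc 1 n, Φ (A i) ⁅if i ≤ a then (2 : R) • ∑ j ∈ Icc 1 a, A j else 0,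
        if i ≤ b then (2 : R) • ∑ j ∈ Icc 1 b, A j else 0⁆ := by
  refine sum_congr rfl fun i hi ↦ ?_
  simp only [bendingGradient, mem_Icc, (mem_Icc.mp hi).1, true_and]

end InvariantForm

section TraceForm

attribute [local instance] LieRing.ofAssociativeRing

variable (m R : Type*) [Fintype m] [DecidableEq m] [CommRing R]

/-- The trace pairing `(X, Y) ↦ Tr(XY)`, through which gradients of functions of matrices are
themselves matrices. -/
def matrixTraceForm : LinearMap.BilinForm R (Matrix m m R) :=
  (LinearMap.mul R (Matrix m m R)).compr₂ (Matrix.traceLinearMap m R R)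

variable {m R}

theorem matrixTraceForm_apply (X Y : Matrix m m R) :
    matrixTraceForm m R X Y = Matrix.trace (X * Y) :=
  rfl

theorem matrixTraceForm_lieInvariant : (matrixTraceForm m R).lieInvariant (Matrix m m R) := by
  intro X Y Z
  simp only [matrixTraceForm_apply, Ring.lie_def, sub_mul, mul_sub, Matrix.trace_sub, neg_sub,
    ← mul_assoc, Matrix.trace_mul_cycle Y Z X]

end TraceForm

/-- The bending Hamiltonians `K_l = Tr((Σ_{i≤l} A_i)²)` are in involution with
respect to the product Lie–Poisson structure on `n`-tuples of `r×r` matrices: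
the Lie–Poisson bracket of `K_a` and `K_b`, computed from their gradients
`i ↦ 2·S_l·1_{i≤l}`, vanishes; equivalently
`Σ_{i≤a} Tr(A_i·(S_a S_b − S_b S_a)) = 0`. -/
theorem bending_hamiltonians_in_involution (R : Type*) [CommRing R]
    (r n : ℕ) (hr : 1 ≤ r) (hn : 1 ≤ n)
    (A : ℕ → Matrix (Fin r) (Fin r) R)
    (S : ℕ → Matrix (Fin r) (Fin r) R)
    (hS : ∀ l, S l = ∑ i ∈ Icc 1 l, A i)
    (a b : ℕ) (ha : 1 ≤ a) (hab : a ≤ b) (hbn : b ≤ n) :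
    (∑ i ∈ Icc 1 n, Matrix.trace (A i *
        ((if i ≤ a then (2 : R) • S a else 0) * (if i ≤ b then (2 : R) • S b else 0)
          - (if i ≤ b then (2 : R) • S b else 0) * (if i ≤ a then (2 : R) • S a else 0)))
      = 0)
    ∧ (∑ i ∈ Icc 1 a, Matrix.trace (A i * (S a * S b - S b * S a)) = 0) := by
  obtain rfl : S = fun l ↦ ∑ i ∈ Icc 1 l, A i := funext hS
  let : LieRing (Matrix (Fin r) (Fin r) R) := LieRing.ofAssociativeRing
  simpa only [liePoissonBracket_bendingGradient_Icc_one, matrixTraceForm_apply, Ring.lie_def] using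
    bending_hamiltonians_in_involution_general (s := Icc 1 n) (I := Icc 1 a) (J := Icc 1 b)
      matrixTraceForm_lieInvariant A (inter_subset_right.trans (Icc_subset_Icc_right hbn))
      (.inl (Icc_subset_Icc_right hab))
end
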